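/- arXiv:2009.01999 — 6 statements merged into one kernel-verified Lean document; each statement's English description precedes it below -/
import Mathlib

section
/- Let a<b be real numbers. The interval potential U_{[a,b]} satisfies the axisymmetric Laplace equation on the open half-plane H = {(ρ,z) : ρ>0}; that is, for all (ρ,z) with ρ>0, ∂²_ρ U_{[a,b]}(ρ,z) + ρ^{-1} ∂_ρ U_{[a,b]}(ρ,z) + ∂²_z U_{[a,b]}(ρ,z) = 0. (Equivalently, U_{[a,b]}, viewed as a rotationally invariant function of (x,y,z) with ρ = √(x²+y²), is harmonic on ℝ³ minus the z-axis.) -/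
/-- Interval potential of the segment `[a,b]` on the `z`-axis. -/
noncomputable def intervalPotential (a b ρ z : ℝ) : ℝ :=
  Real.log (Real.sqrt (ρ ^ 2 + (z - a) ^ 2) - (z - a)) -
    Real.log (Real.sqrt (ρ ^ 2 + (z - b) ^ 2) - (z - b))

lemma ip_Rpos (s ρ : ℝ) (hρ : 0 < ρ) : 0 < Real.sqrt (ρ ^ 2 + s ^ 2) :=
  Real.sqrt_pos.2 (by positivity)

lemma ip_pos (s ρ : ℝ) (hρ : 0 < ρ) : 0 < Real.sqrt (ρ ^ 2 + s ^ 2) - s := by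
  have : s < Real.sqrt (ρ ^ 2 + s ^ 2) := by
    apply Real.lt_sqrt_of_sq_lt
    nlinarith [sq_pos_of_pos hρ]
  linarith

lemma ip_sqrt_rho (s ρ : ℝ) (hρ : 0 < ρ) :
    HasDerivAt (fun p => Real.sqrt (p ^ 2 + s ^ 2)) (ρ / Real.sqrt (ρ ^ 2 + s ^ 2)) ρ := by
  have h := (((hasDerivAt_id ρ).pow 2).add_const (s ^ 2)).sqrt
    (by simp only [Pi.pow_apply, id]; positivity)
  refine h.congr_deriv ?_
  have := (ip_Rpos s ρ hρ).ne'
  simp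
  field_simp

lemma ip_sqrt_z (c ρ z : ℝ) (hρ : 0 < ρ) :
    HasDerivAt (fun w => Real.sqrt (ρ ^ 2 + (w - c) ^ 2))
      ((z - c) / Real.sqrt (ρ ^ 2 + (z - c) ^ 2)) z := by
  have h := ((((hasDerivAt_id z).sub_const c).pow 2).const_add (ρ ^ 2)).sqrt
    (by simp only [Pi.pow_apply, id]; positivity)
  refine h.congr_deriv ?_
  have := (ip_Rpos (z - c) ρ hρ).ne'
  simp
  field_simp

lemma ip_rho1 (s ρ : ℝ) (hρ : 0 < ρ) :
    HasDerivAt (fun p => Real.log (Real.sqrt (p ^ 2 + s ^ 2) - s))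
      (ρ⁻¹ + s / (Real.sqrt (ρ ^ 2 + s ^ 2) * ρ)) ρ := by
  have h := ((ip_sqrt_rho s ρ hρ).sub_const s).log (ip_pos s ρ hρ).ne'
  refine h.congr_deriv ?_
  have h1 := (ip_Rpos s ρ hρ).ne'
  have h2 := (ip_pos s ρ hρ).ne'
  have h3 : Real.sqrt (ρ ^ 2 + s ^ 2) ^ 2 = ρ ^ 2 + s ^ 2 := Real.sq_sqrt (by positivity)
  generalize Real.sqrt (ρ ^ 2 + s ^ 2) = R at *
  field_simp
  linear_combination -h3

lemma ip_z1 (c ρ z : ℝ) (hρ : 0 < ρ) :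
    HasDerivAt (fun w => Real.log (Real.sqrt (ρ ^ 2 + (w - c) ^ 2) - (w - c)))
      (-(Real.sqrt (ρ ^ 2 + (z - c) ^ 2))⁻¹) z := by
  have h := ((ip_sqrt_z c ρ z hρ).sub ((hasDerivAt_id z).sub_const c)).log
    (ip_pos (z - c) ρ hρ).ne'
  refine h.congr_deriv ?_
  have h1 := (ip_Rpos (z - c) ρ hρ).ne'
  have h2 := (ip_pos (z - c) ρ hρ).ne'
  simp only [Pi.sub_apply, id]
  generalize Real.sqrt (ρ ^ 2 + (z - c) ^ 2) = R at *
  field_simp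
  ring

lemma ip_rho2 (s ρ : ℝ) (hρ : 0 < ρ) :
    HasDerivAt (fun p => p⁻¹ + s / (Real.sqrt (p ^ 2 + s ^ 2) * p))
      (-(ρ ^ 2)⁻¹ - s / (Real.sqrt (ρ ^ 2 + s ^ 2) * ρ ^ 2) - s / Real.sqrt (ρ ^ 2 + s ^ 2) ^ 3)
      ρ := by
  have h1 := (ip_Rpos s ρ hρ).ne'
  have h := (hasDerivAt_inv hρ.ne').add ((hasDerivAt_const ρ s).div
    ((ip_sqrt_rho s ρ hρ).mul (hasDerivAt_id ρ)) (mul_ne_zero h1 hρ.ne'))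
  refine h.congr_deriv ?_
  simp only [Pi.mul_apply, id]
  generalize Real.sqrt (ρ ^ 2 + s ^ 2) = R at *
  field_simp
  ring

lemma ip_z2 (c ρ z : ℝ) (hρ : 0 < ρ) :
    HasDerivAt (fun w => -(Real.sqrt (ρ ^ 2 + (w - c) ^ 2))⁻¹)
      ((z - c) / Real.sqrt (ρ ^ 2 + (z - c) ^ 2) ^ 3) z := by
  have h1 := (ip_Rpos (z - c) ρ hρ).ne'
  have h := ((ip_sqrt_z c ρ z hρ).inv h1).neg
  refine h.congr_deriv ?_
  generalize Real.sqrt (ρ ^ 2 + (z - c) ^ 2) = R at *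
  field_simp

/-- The interval potential satisfies the axisymmetric Laplace equation on `{ρ > 0}`. -/
theorem intervalPotential_axisymmetric_harmonic (a b : ℝ) (hab : a < b)
    (ρ z : ℝ) (hρ : 0 < ρ) :
    deriv (fun p => deriv (fun p' => intervalPotential a b p' z) p) ρ
      + ρ⁻¹ * deriv (fun p => intervalPotential a b p z) ρ
      + deriv (fun w => deriv (fun w' => intervalPotential a b ρ w') w) z = 0 := by
  have hr : ∀ p : ℝ, 0 < p → HasDerivAt (fun p' => intervalPotential a b p' z) _ p :=
    fun p hp => (ip_rho1 (z - a) p hp).sub (ip_rho1 (z - b) p hp)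
  have hz : ∀ w : ℝ, HasDerivAt (fun w' => intervalPotential a b ρ w') _ w :=
    fun w => (ip_z1 a ρ w hρ).sub (ip_z1 b ρ w hρ)
  have e1 : (fun p => deriv (fun p' => intervalPotential a b p' z) p) =ᶠ[nhds ρ] _ :=
    (eventually_gt_nhds hρ).mono fun p hp => (hr p hp).deriv
  have e2 := funext fun w => (hz w).deriv
  have d1 := ((ip_rho2 (z - a) ρ hρ).sub (ip_rho2 (z - b) ρ hρ)).deriv
  have d2 := ((ip_z2 a ρ z hρ).sub (ip_z2 b ρ z hρ)).deriv
  rw [e1.deriv_eq, (hr ρ hρ).deriv, e2]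
  refine (congrArg₂ (· + ·) (congrArg (· + _) d1) d2).trans ?_
  have h1 := (ip_Rpos (z - a) ρ hρ).ne'
  have h2 := (ip_Rpos (z - b) ρ hρ).ne'
  generalize Real.sqrt (ρ ^ 2 + (z - a) ^ 2) = R at *
  generalize Real.sqrt (ρ ^ 2 + (z - b) ^ 2) = S at *
  field_simp
  ring
end

section
/- Let a<b be real numbers and let z₀ ∈ (a,b) be fixed. Then lim_{ρ→0⁺} ( U_{[a,b]}(ρ,z₀) − 2 log ρ ) = − log(2(z₀−a)) − log(2(b−z₀)). In particular U_{[a,b]} ∼ 2 log ρ near the interior of the segment I=[a,b] of the z-axis. -/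
open Filter Topology

/-- Near an interior point of the segment, `U_{[a,b]} ∼ 2 log ρ` with explicit constant. -/
theorem intervalPotential_axis_asymptotics (a b z₀ : ℝ) (hab : a < b)
    (hz₀ : z₀ ∈ Set.Ioo a b) :
    Tendsto (fun ρ => intervalPotential a b ρ z₀ - 2 * Real.log ρ)
      (𝓝[>] (0 : ℝ))
      (𝓝 (-Real.log (2 * (z₀ - a)) - Real.log (2 * (b - z₀)))) := by
  obtain ⟨h1, h2⟩ := hz₀
  have hA : 0 < z₀ - a := by linarith
  have hB : 0 < b - z₀ := by linarith
  have key : (fun ρ => -Real.log (Real.sqrt (ρ ^ 2 + (z₀ - a) ^ 2) + (z₀ - a)) -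
      Real.log (Real.sqrt (ρ ^ 2 + (z₀ - b) ^ 2) - (z₀ - b))) =ᶠ[𝓝[>] (0 : ℝ)]
      (fun ρ => intervalPotential a b ρ z₀ - 2 * Real.log ρ) := by
    filter_upwards [self_mem_nhdsWithin] with ρ hρ
    have hρ : 0 < ρ := hρ
    have hs := Real.sq_sqrt (show 0 ≤ ρ ^ 2 + (z₀ - a) ^ 2 by positivity)
    have hs0 := Real.sqrt_nonneg (ρ ^ 2 + (z₀ - a) ^ 2)
    have hp : 0 < Real.sqrt (ρ ^ 2 + (z₀ - a) ^ 2) + (z₀ - a) := by linarith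
    have e : Real.sqrt (ρ ^ 2 + (z₀ - a) ^ 2) - (z₀ - a) =
        ρ ^ 2 / (Real.sqrt (ρ ^ 2 + (z₀ - a) ^ 2) + (z₀ - a)) := by
      rw [eq_div_iff hp.ne']
      linear_combination hs
    have e2 : Real.log (Real.sqrt (ρ ^ 2 + (z₀ - a) ^ 2) - (z₀ - a)) =
        2 * Real.log ρ - Real.log (Real.sqrt (ρ ^ 2 + (z₀ - a) ^ 2) + (z₀ - a)) := by
      rw [e, Real.log_div (by positivity) hp.ne', Real.log_pow]
      norm_num
    unfold intervalPotential
    rw [e2]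
    ring
  refine Tendsto.congr' key ?_
  have ea : Real.sqrt ((0 : ℝ) ^ 2 + (z₀ - a) ^ 2) + (z₀ - a) = 2 * (z₀ - a) := by
    rw [show (0 : ℝ) ^ 2 + (z₀ - a) ^ 2 = (z₀ - a) ^ 2 by ring, Real.sqrt_sq hA.le]
    ring
  have eb : Real.sqrt ((0 : ℝ) ^ 2 + (z₀ - b) ^ 2) - (z₀ - b) = 2 * (b - z₀) := by
    rw [show (0 : ℝ) ^ 2 + (z₀ - b) ^ 2 = (b - z₀) ^ 2 by ring, Real.sqrt_sq hB.le]
    ring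
  rw [← ea, ← eb]
  have ca : ContinuousAt (fun ρ : ℝ => Real.log (Real.sqrt (ρ ^ 2 + (z₀ - a) ^ 2) + (z₀ - a))) 0 :=
    ContinuousAt.log (by fun_prop) (by rw [ea]; positivity)
  have cb : ContinuousAt (fun ρ : ℝ => Real.log (Real.sqrt (ρ ^ 2 + (z₀ - b) ^ 2) - (z₀ - b))) 0 :=
    ContinuousAt.log (by fun_prop) (by rw [eb]; positivity)
  exact (ca.tendsto.neg.sub cb.tendsto).mono_left nhdsWithin_le_nhds
end

section
/- Let a<b be real numbers. There exist constants C₀>0 and R>0 such that for all (ρ,z) with ρ>0 and r := √(ρ²+z²) ≥ R, one has | U_{[a,b]}(ρ,z) − (a−b)/r | ≤ C₀ / r². That is, U_{[a,b]} = (a−b)/r + O(r^{-2}) as r → ∞, uniformly on the open half-plane {ρ>0}. -/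
theorem ipaux_tri (ρ x y : ℝ) :
    Real.sqrt (ρ ^ 2 + (x + y) ^ 2) ≤ Real.sqrt (ρ ^ 2 + x ^ 2) + |y| := by
  have h1 : |x| ≤ Real.sqrt (ρ ^ 2 + x ^ 2) := Real.abs_le_sqrt (by nlinarith [sq_nonneg ρ])
  have h2 := Real.sq_sqrt (show 0 ≤ ρ ^ 2 + x ^ 2 by positivity)
  rw [Real.sqrt_le_iff]
  refine ⟨by positivity, ?_⟩
  have h3 : x * y ≤ |x| * |y| := by rw [← abs_mul]; exact le_abs_self _
  have h4 := mul_le_mul_of_nonneg_right h1 (abs_nonneg y)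
  nlinarith [sq_abs y]

theorem ipaux_deriv (ρ z c : ℝ) (hρ : 0 < ρ) :
    HasDerivAt (fun c : ℝ => Real.log (Real.sqrt (ρ ^ 2 + (z - c) ^ 2) - (z - c)))
      (1 / Real.sqrt (ρ ^ 2 + (z - c) ^ 2)) c := by
  have hp : 0 < ρ ^ 2 + (z - c) ^ 2 := by positivity
  have hs : 0 < Real.sqrt (ρ ^ 2 + (z - c) ^ 2) := Real.sqrt_pos.2 hp
  have hlt : z - c < Real.sqrt (ρ ^ 2 + (z - c) ^ 2) :=
    Real.lt_sqrt_of_sq_lt (by nlinarith [sq_pos_of_pos hρ])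
  have h0 : HasDerivAt (fun c : ℝ => z - c) (-1) c := by
    simpa using (hasDerivAt_id c).const_sub z
  have h1 := (((h0.pow 2).const_add (ρ ^ 2)).sqrt hp.ne')
  have h2 := (h1.sub h0).log (sub_pos.2 hlt).ne'
  refine h2.congr_deriv ?_
  have h3 := (sub_pos.2 hlt).ne'
  simp only [Pi.sub_apply, Pi.pow_apply]
  generalize Real.sqrt (ρ ^ 2 + (z - c) ^ 2) = s at *
  field_simp
  norm_num
  ring

/-- `U_{[a,b]} = (a−b)/r + O(r⁻²)` as `r → ∞`, uniformly on the half-plane `{ρ > 0}`. -/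
theorem intervalPotential_infinity_asymptotics (a b : ℝ) (hab : a < b) :
    ∃ C₀ > (0 : ℝ), ∃ R > (0 : ℝ), ∀ ρ z : ℝ, 0 < ρ →
      R ≤ Real.sqrt (ρ ^ 2 + z ^ 2) →
      |intervalPotential a b ρ z - (a - b) / Real.sqrt (ρ ^ 2 + z ^ 2)| ≤
        C₀ / (Real.sqrt (ρ ^ 2 + z ^ 2)) ^ 2 := by
  set M := |a| + |b| + 1 with hM
  have hMp : 0 < M := by positivity
  have hba : 0 < b - a := sub_pos.2 hab
  refine ⟨2 * M * (b - a), by positivity, 2 * M, by positivity, ?_⟩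
  intro ρ z hρ hR
  obtain ⟨c, hc, hcd⟩ := exists_hasDerivAt_eq_slope
    (fun c : ℝ => Real.log (Real.sqrt (ρ ^ 2 + (z - c) ^ 2) - (z - c)))
    (fun c => 1 / Real.sqrt (ρ ^ 2 + (z - c) ^ 2)) hab
    (fun c _ => (ipaux_deriv ρ z c hρ).continuousAt.continuousWithinAt)
    (fun c _ => ipaux_deriv ρ z c hρ)
  have hcM : |c| ≤ M := by
    rw [abs_le]
    constructor <;> linarith [hc.1, hc.2, neg_abs_le a, le_abs_self b, abs_nonneg a, abs_nonneg b]
  have t1 := ipaux_tri ρ z (-c)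
  have t2 := ipaux_tri ρ (z - c) c
  rw [abs_neg, ← sub_eq_add_neg] at t1
  rw [sub_add_cancel] at t2
  have hU : intervalPotential a b ρ z = -(b - a) * (1 / Real.sqrt (ρ ^ 2 + (z - c) ^ 2)) := by
    rw [hcd, intervalPotential]
    field_simp
    ring
  rw [hU]
  generalize Real.sqrt (ρ ^ 2 + (z - c) ^ 2) = s at *
  generalize Real.sqrt (ρ ^ 2 + z ^ 2) = r at *
  have hr : 0 < r := by linarith
  have hs : r / 2 ≤ s := by linarith
  have hs0 : 0 < s := by linarith
  have he : -(b - a) * (1 / s) - (a - b) / r = (b - a) * ((s - r) / (s * r)) := by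
    field_simp
    ring
  have hd : |s - r| ≤ M := by
    rw [abs_le]
    constructor <;> linarith
  rw [he, abs_mul, abs_of_pos hba, abs_div, abs_of_pos (mul_pos hs0 hr)]
  have : |s - r| / (s * r) ≤ M / (r / 2 * r) := by gcongr
  calc (b - a) * (|s - r| / (s * r)) ≤ (b - a) * (M / (r / 2 * r)) := by gcongr
    _ = _ := by field_simp
end

section
/- Let Ω be an open subset of the half-plane H = {(ρ,z) : ρ>0} and let u, v be smooth functions on Ω each satisfying the axisymmetric Laplace equation ∂²_ρ w + ρ^{-1} ∂_ρ w + ∂²_z w = 0. Define P and Q on Ω by P = (ρ/4)[ (∂_ρu)² − (∂_zu)² + (∂_ρv)² − (∂_zv)² + ∂_ρu ∂_ρv − ∂_zu ∂_zv ] − (1/2)(∂_ρu + ∂_ρv) and Q = (ρ/4)[ 2 ∂_ρu ∂_zu + 2 ∂_ρv ∂_zv + ∂_ρu ∂_zv + ∂_zu ∂_ρv ] − (1/2)(∂_zu + ∂_zv). Then the 1-form P dρ + Q dz is closed on Ω: ∂_z P = ∂_ρ Q everywhere on Ω. -/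
open Filter Topology

theorem line_aux {E : Type*} [NormedAddCommGroup E] [NormedSpace ℝ E] (F : ℝ × ℝ → E)
    (F' : ℝ × ℝ →L[ℝ] E) (a b : ℝ) (h : HasFDerivAt F F' (a, b)) :
    HasDerivAt (fun s => F (s, b)) (F' (1, 0)) a ∧ HasDerivAt (fun t => F (a, t)) (F' (0, 1)) b := by
  constructor
  · have hl : HasDerivAt (fun s : ℝ => (s, b)) ((1 : ℝ), (0 : ℝ)) a :=
      (hasDerivAt_id a).prodMk (hasDerivAt_const a b)
    exact HasFDerivAt.comp_hasDerivAt (l := F) (f := fun s : ℝ => (s, b)) a h hl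
  · have hl : HasDerivAt (fun t : ℝ => (a, t)) ((0 : ℝ), (1 : ℝ)) b :=
      (hasDerivAt_const b a).prodMk (hasDerivAt_id b)
    exact HasFDerivAt.comp_hasDerivAt (l := F) (f := fun t : ℝ => (a, t)) b h hl

theorem partials_aux (Ω : Set (ℝ × ℝ)) (hΩ : IsOpen Ω) (w : ℝ → ℝ → ℝ)
    (hw : ContDiffOn ℝ (⊤ : ℕ∞) (fun p : ℝ × ℝ => w p.1 p.2) Ω) (a b : ℝ) (hp : (a, b) ∈ Ω) :
    ∃ m rr zz : ℝ,
      HasDerivAt (fun t => deriv (fun s => w s t) a) m b ∧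
      HasDerivAt (fun s => deriv (fun t => w s t) b) m a ∧
      HasDerivAt (fun s => deriv (fun s' => w s' b) s) rr a ∧
      HasDerivAt (fun t => deriv (fun t' => w a t') t) zz b := by
  set f : ℝ × ℝ → ℝ := fun p => w p.1 p.2 with hf
  have hline1 : ∀ x y : ℝ, HasDerivAt (fun s : ℝ => (s, y)) ((1 : ℝ), (0 : ℝ)) x := fun x y =>
    (hasDerivAt_id x).prodMk (hasDerivAt_const x y)
  have hline2 : ∀ x y : ℝ, HasDerivAt (fun t : ℝ => (x, t)) ((0 : ℝ), (1 : ℝ)) y := fun x y =>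
    (hasDerivAt_const y x).prodMk (hasDerivAt_id y)
  have hdiff : ∀ q ∈ Ω, HasFDerivAt f (fderiv ℝ f q) q := fun q hq =>
    ((hw.contDiffAt (hΩ.mem_nhds hq)).differentiableAt (by simp)).hasFDerivAt
  have h1 : ∀ x y, (x, y) ∈ Ω → deriv (fun s => w s y) x = fderiv ℝ f (x, y) (1, 0) := fun x y h =>
    (line_aux f _ x y (hdiff _ h)).1.deriv
  have h2 : ∀ x y, (x, y) ∈ Ω → deriv (fun t => w x t) y = fderiv ℝ f (x, y) (0, 1) := fun x y h =>
    (line_aux f _ x y (hdiff _ h)).2.deriv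
  have hat : ContDiffAt ℝ (⊤ : ℕ∞) f (a, b) := hw.contDiffAt (hΩ.mem_nhds hp)
  have hL : HasFDerivAt (fderiv ℝ f) (fderiv ℝ (fderiv ℝ f) (a, b)) (a, b) :=
    ((hat.fderiv_right (m := 1) (by norm_cast)).differentiableAt (by simp)).hasFDerivAt
  have hsym : IsSymmSndFDerivAt ℝ f (a, b) :=
    hat.isSymmSndFDerivAt (by simp; norm_cast)
  set L := fderiv ℝ (fderiv ℝ f) (a, b) with hLdef
  have e1 : ∀ᶠ s in 𝓝 a, (s, b) ∈ Ω :=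
    (hline1 a b).continuousAt.eventually (hΩ.mem_nhds hp)
  have e2 : ∀ᶠ t in 𝓝 b, (a, t) ∈ Ω :=
    (hline2 a b).continuousAt.eventually (hΩ.mem_nhds hp)
  have g1 : ∀ c : ℝ × ℝ, HasDerivAt (fun s => fderiv ℝ f (s, b) c) (L (1, 0) c) a := fun c => by
    exact ((ContinuousLinearMap.apply ℝ ℝ c).hasFDerivAt.comp_hasDerivAt a (line_aux _ L a b hL).1)
  have g2 : ∀ c : ℝ × ℝ, HasDerivAt (fun t => fderiv ℝ f (a, t) c) (L (0, 1) c) b := fun c => by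
    exact ((ContinuousLinearMap.apply ℝ ℝ c).hasFDerivAt.comp_hasDerivAt b (line_aux _ L a b hL).2)
  refine ⟨L (0, 1) (1, 0), L (1, 0) (1, 0), L (0, 1) (0, 1), ?_, ?_, ?_, ?_⟩
  · exact (g2 _).congr_of_eventuallyEq (e2.mono fun t ht => h1 _ _ ht)
  · rw [hsym.eq]
    exact (g1 _).congr_of_eventuallyEq (e1.mono fun t ht => h2 _ _ ht)
  · exact (g1 _).congr_of_eventuallyEq (e1.mono fun t ht => h1 _ _ ht)
  · exact (g2 _).congr_of_eventuallyEq (e2.mono fun t ht => h2 _ _ ht)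

/-- The integrability condition for the quadrature determining the conformal factor `α`:
for harmonic (axisymmetric) `u`, `v`, the 1-form `P dρ + Q dz` is closed. -/
theorem quadrature_one_form_closed
    (Ω : Set (ℝ × ℝ)) (hΩ : IsOpen Ω) (hΩH : Ω ⊆ {p : ℝ × ℝ | 0 < p.1})
    (u v : ℝ → ℝ → ℝ)
    (hu_smooth : ContDiffOn ℝ (⊤ : ℕ∞) (fun p : ℝ × ℝ => u p.1 p.2) Ω)
    (hv_smooth : ContDiffOn ℝ (⊤ : ℕ∞) (fun p : ℝ × ℝ => v p.1 p.2) Ω)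
    (hu_harm : ∀ p ∈ Ω,
      deriv (fun s => deriv (fun s' => u s' p.2) s) p.1
        + p.1⁻¹ * deriv (fun s => u s p.2) p.1
        + deriv (fun t => deriv (fun t' => u p.1 t') t) p.2 = 0)
    (hv_harm : ∀ p ∈ Ω,
      deriv (fun s => deriv (fun s' => v s' p.2) s) p.1
        + p.1⁻¹ * deriv (fun s => v s p.2) p.1
        + deriv (fun t => deriv (fun t' => v p.1 t') t) p.2 = 0)
    (P Q : ℝ → ℝ → ℝ)
    (hP : ∀ ρ z : ℝ, P ρ z =
      ρ / 4 * ((deriv (fun s => u s z) ρ) ^ 2 - (deriv (fun t => u ρ t) z) ^ 2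
        + (deriv (fun s => v s z) ρ) ^ 2 - (deriv (fun t => v ρ t) z) ^ 2
        + deriv (fun s => u s z) ρ * deriv (fun s => v s z) ρ
        - deriv (fun t => u ρ t) z * deriv (fun t => v ρ t) z)
      - 1 / 2 * (deriv (fun s => u s z) ρ + deriv (fun s => v s z) ρ))
    (hQ : ∀ ρ z : ℝ, Q ρ z =
      ρ / 4 * (2 * deriv (fun s => u s z) ρ * deriv (fun t => u ρ t) z
        + 2 * deriv (fun s => v s z) ρ * deriv (fun t => v ρ t) z
        + deriv (fun s => u s z) ρ * deriv (fun t => v ρ t) z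
        + deriv (fun t => u ρ t) z * deriv (fun s => v s z) ρ)
      - 1 / 2 * (deriv (fun t => u ρ t) z + deriv (fun t => v ρ t) z)) :
    ∀ p ∈ Ω, deriv (fun t => P p.1 t) p.2 = deriv (fun s => Q s p.2) p.1 := by
  rintro ⟨a, b⟩ hp
  have ha : 0 < a := hΩH hp
  obtain ⟨mu, ru, zu, u1, u2, u3, u4⟩ := partials_aux Ω hΩ u hu_smooth a b hp
  obtain ⟨mv, rv, zv, v1, v2, v3, v4⟩ := partials_aux Ω hΩ v hv_smooth a b hp
  have hu := hu_harm _ hp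
  have hv := hv_harm _ hp
  simp only [u3.deriv, u4.deriv] at hu
  simp only [v3.deriv, v4.deriv] at hv
  simp only [hP, hQ]
  have dP := ((((((((u1.pow 2).sub (u4.pow 2)).add (v1.pow 2)).sub (v4.pow 2)).add
    (u1.mul v1)).sub (u4.mul v4)).const_mul (a / 4)).sub ((u1.add v1).const_mul (1 / 2))).deriv
  have dQ := (((((hasDerivAt_id a).div_const 4)).mul
    (((((u3.const_mul 2).mul u2).add ((v3.const_mul 2).mul v2)).add (u3.mul v2)).add
      (u2.mul v3))).sub ((u2.add v2).const_mul (1 / 2))).deriv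
  refine Eq.trans dP (Eq.trans ?_ dQ.symm)
  simp only [Pi.add_apply, Pi.mul_apply, id]
  generalize deriv (fun s => u s b) a = ur at *
  generalize deriv (fun s => v s b) a = vr at *
  generalize deriv (fun t => u a t) b = uz at *
  generalize deriv (fun t => v a t) b = vz at *
  have hzu : zu = -ru - a⁻¹ * ur := by linarith
  have hzv : zv = -rv - a⁻¹ * vr := by linarith
  subst hzu hzv
  field_simp
  push_cast
  ring
end

section
/- Let L>0, let c be a real constant, and let u, v be C¹ functions on the half-plane H = {(ρ,z) : ρ>0} that are 2L-periodic in z (u(ρ,z+2L)=u(ρ,z), v(ρ,z+2L)=v(ρ,z)) and satisfy the reflection relation u(ρ,z) − v(ρ,−z) = c for all ρ>0, z∈ℝ. Define Q(ρ,z) = (ρ/4)[ 2 ∂_ρu ∂_zu + 2 ∂_ρv ∂_zv + ∂_ρu ∂_zv + ∂_zu ∂_ρv ] − (1/2)(∂_zu + ∂_zv). Then for every ρ>0, ∫_{−L}^{L} Q(ρ,z) dz = 0. -/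
open Filter Topology intervalIntegral

/-- For `2L`-periodic `u`, `v` related by the reflection identity `u(ρ,z) − v(ρ,−z) = c`,
the integral of the quadrature integrand `Q` over a period vanishes; this balances the
string of spherical black holes. -/
theorem quadrature_Q_integral_vanishes_reflection
    (L c : ℝ) (hL : 0 < L)
    (u v : ℝ → ℝ → ℝ)
    (hu_C1 : ContDiffOn ℝ 1 (fun p : ℝ × ℝ => u p.1 p.2) {p : ℝ × ℝ | 0 < p.1})
    (hv_C1 : ContDiffOn ℝ 1 (fun p : ℝ × ℝ => v p.1 p.2) {p : ℝ × ℝ | 0 < p.1})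
    (hu_per : ∀ ρ z : ℝ, 0 < ρ → u ρ (z + 2 * L) = u ρ z)
    (hv_per : ∀ ρ z : ℝ, 0 < ρ → v ρ (z + 2 * L) = v ρ z)
    (h_refl : ∀ ρ z : ℝ, 0 < ρ → u ρ z - v ρ (-z) = c)
    (Q : ℝ → ℝ → ℝ)
    (hQ : ∀ ρ z : ℝ, Q ρ z =
      ρ / 4 * (2 * deriv (fun s => u s z) ρ * deriv (fun t => u ρ t) z
        + 2 * deriv (fun s => v s z) ρ * deriv (fun t => v ρ t) z
        + deriv (fun s => u s z) ρ * deriv (fun t => v ρ t) z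
        + deriv (fun t => u ρ t) z * deriv (fun s => v s z) ρ)
      - 1 / 2 * (deriv (fun t => u ρ t) z + deriv (fun t => v ρ t) z)) :
    ∀ ρ : ℝ, 0 < ρ → (∫ z in (-L)..L, Q ρ z) = 0 := by
  intro ρ hρ
  have hρd : ∀ z, deriv (fun s => u s z) ρ = deriv (fun s => v s (-z)) ρ := by
    intro z
    have h : (fun s => u s z) =ᶠ[𝓝 ρ] fun s => v s (-z) + c := by
      filter_upwards [lt_mem_nhds hρ] with s hs
      linarith [h_refl s z hs]
    rw [h.deriv_eq, deriv_add_const]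
  have hzd : ∀ z, deriv (fun t => u ρ t) z = -deriv (fun t => v ρ t) (-z) := by
    intro z
    have h : (fun t => u ρ t) = fun t => v ρ (-t) + c := by
      funext t
      linarith [h_refl ρ t hρ]
    rw [h, deriv_add_const]
    exact deriv_comp_neg (fun t => v ρ t) z
  have hodd : ∀ z, Q ρ (-z) = -Q ρ z := by
    intro z
    rw [hQ, hQ, hρd z, hρd (-z), hzd z, hzd (-z), neg_neg]
    ring
  have h1 : (∫ z in (-L)..L, Q ρ (-z)) = ∫ z in (-L)..L, Q ρ z := by
    rw [intervalIntegral.integral_comp_neg (fun z => Q ρ z), neg_neg]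
  simp only [hodd, intervalIntegral.integral_neg] at h1
  linarith
end

section
/- Let A, B ∈ ℝ and let C ∈ ℝ satisfy 4C = A² + B² + AB − 2(A+B). Then C + 1 > 0, and the four Kasner exponents p₁ = C/(C+1), p₂ = (2−A−B)/(2(C+1)), p₃ = A/(2(C+1)), p₄ = B/(2(C+1)) satisfy the Kasner conditions p₁ + p₂ + p₃ + p₄ = 1 and p₁² + p₂² + p₃² + p₄² = 1. -/
/-- The exponents produced by the substitution `τ = ρ^{C+1}` satisfy the Kasner
conditions whenever `4C = A² + B² + AB − 2(A+B)`. -/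
theorem kasner_conditions (A B C : ℝ)
    (hC : 4 * C = A ^ 2 + B ^ 2 + A * B - 2 * (A + B)) :
    0 < C + 1 ∧
      C / (C + 1) + (2 - A - B) / (2 * (C + 1)) + A / (2 * (C + 1)) + B / (2 * (C + 1)) = 1 ∧
      (C / (C + 1)) ^ 2 + ((2 - A - B) / (2 * (C + 1))) ^ 2 + (A / (2 * (C + 1))) ^ 2
        + (B / (2 * (C + 1))) ^ 2 = 1 := by
  have h : 0 < C + 1 := by
    nlinarith [sq_nonneg (A - B), sq_nonneg (A + B - 4 / 3)]
  have hne : C + 1 ≠ 0 := h.ne'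
  refine ⟨h, ?_, ?_⟩
  · field_simp
    ring
  · have e : (C / (C + 1)) ^ 2 + ((2 - A - B) / (2 * (C + 1))) ^ 2 + (A / (2 * (C + 1))) ^ 2
        + (B / (2 * (C + 1))) ^ 2
        = (4 * C ^ 2 + (2 - A - B) ^ 2 + A ^ 2 + B ^ 2) / (4 * (C + 1) ^ 2) := by
      field_simp
      ring
    rw [e, div_eq_one_iff_eq (by positivity)]
    linear_combination (-2) * hC
end
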